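/- Assume 2k + 1 ≤ n, A satisfies the (2k+1)-RIP (δ_{2k+1} < 1), every column of A has unit Euclidean norm, and x* satisfies the recovery condition γ_k^RIP ‖e‖₂ < min_{i∈S*}|x*_i|/(2k) − α_k^RIP ‖x*‖₂. Then for every SEA trajectory, for all initializations X⁰ ∈ ℝⁿ and all step sizes η > 0, there exists t_s ≤ T_RIP such that S* ⊆ S^{t_s}, where T_RIP = (2k‖X⁰‖_∞/η + (k+1) min_{i∈S*}|x*_i|) / (min_{i∈S*}|x*_i| − 2k(α_k^RIP ‖x*‖₂ + γ_k^RIP ‖e‖₂)). -/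

import Mathlib

noncomputable section
open Finset Matrix

/-- Support of a vector as a finite set of indices. -/
def spt {d : ℕ} (x : Fin d → ℝ) : Finset (Fin d) :=
  Finset.univ.filter (fun i => x i ≠ 0)

/-- Euclidean (ℓ²) norm of a vector. -/
def l2norm {d : ℕ} (v : Fin d → ℝ) : ℝ :=
  Real.sqrt (∑ i, (v i) ^ 2)

/-- Sup (ℓ∞) norm of a vector. -/
def supNorm {d : ℕ} (v : Fin d → ℝ) : ℝ :=
  ⨆ i, |v i|

/-- The `l`-th restricted isometry constant of `A`: the smallest `δ ≥ 0` such that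
`(1-δ)‖x‖₂² ≤ ‖Ax‖₂² ≤ (1+δ)‖x‖₂²` for every `x` with at most `l` nonzero entries. -/
def ripConst {m n : ℕ} (A : Matrix (Fin m) (Fin n) ℝ) (l : ℕ) : ℝ :=
  sInf {δ : ℝ | 0 ≤ δ ∧ ∀ x : Fin n → ℝ, (spt x).card ≤ l →
    (1 - δ) * ∑ i, (x i) ^ 2 ≤ ∑ j, (A.mulVec x j) ^ 2 ∧
    ∑ j, (A.mulVec x j) ^ 2 ≤ (1 + δ) * ∑ i, (x i) ^ 2}

/-- `α_k^RIP = δ_{2k+1} (1 + δ_{2k} / (1 - δ_k))`. -/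
def alphaRIP {m n : ℕ} (A : Matrix (Fin m) (Fin n) ℝ) (k : ℕ) : ℝ :=
  ripConst A (2 * k + 1) * (1 + ripConst A (2 * k) / (1 - ripConst A k))

/-- `γ_k^RIP = 1 + δ_{2k+1} √(1+δ_k) / (1 - δ_k)`. -/
def gammaRIP {m n : ℕ} (A : Matrix (Fin m) (Fin n) ℝ) (k : ℕ) : ℝ :=
  1 + ripConst A (2 * k + 1) * Real.sqrt (1 + ripConst A k) / (1 - ripConst A k)

/-- The oracle update direction `u^t` (for current support `S`):
`u_i = -η x*_i` for `i ∈ S* \ S` and `u_i = 0` otherwise. -/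
def oracleUpd {n : ℕ} (xstar : Fin n → ℝ) (η : ℝ) (S : Finset (Fin n)) : Fin n → ℝ :=
  fun i => if xstar i ≠ 0 ∧ i ∉ S then -η * xstar i else 0

/-- The gradient noise `b = u - η Aᵀ(A x - y)`. -/
def gradNoise {m n : ℕ} (A : Matrix (Fin m) (Fin n) ℝ) (y : Fin m → ℝ)
    (xstar : Fin n → ℝ) (η : ℝ) (S : Finset (Fin n)) (xt : Fin n → ℝ) : Fin n → ℝ :=
  oracleUpd xstar η S - η • (Aᵀ.mulVec (A.mulVec xt - y))

/-- A SEA trajectory with step size `η` and initialization `X0`. -/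
structure SEATraj {m n : ℕ} (k : ℕ) (A : Matrix (Fin m) (Fin n) ℝ) (y : Fin m → ℝ)
    (η : ℝ) (X0 : Fin n → ℝ) where
  S : ℕ → Finset (Fin n)
  x : ℕ → Fin n → ℝ
  X : ℕ → Fin n → ℝ
  X_init : X 0 = X0
  card_S : ∀ t, (S t).card = k
  sel : ∀ t, ∀ i ∈ S t, ∀ j, j ∉ S t → |X t j| ≤ |X t i|
  x_supp : ∀ t, ∀ i, i ∉ S t → x t i = 0
  x_min : ∀ t, ∀ z : Fin n → ℝ, (∀ i, i ∉ S t → z i = 0) →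
    l2norm (A.mulVec (x t) - y) ≤ l2norm (A.mulVec z - y)
  X_upd : ∀ t, X (t + 1) = X t - η • (Aᵀ.mulVec (A.mulVec (x t) - y))

/-!
For a least-squares solution `x` on `S`, the gradient `Aᵀ (A x - y)` vanishes on `S`, and off `S`
it equals `-x*` up to an error `ε = α ‖x*‖ + γ ‖e‖`: in the noiseless case its `i`-th entry is the
inner product of `A e_i` and `A (x - x*)`, `e_i` being the `i`-th unit vector, and by polarization
of the restricted isometry inequality this is within `δ_{2k+1} ‖x - x*‖` of `(x - x*)_i = -x*_i`.

Hence, with `M = min_{S*} |x*_i|`, each time a true coordinate is missed it gains at least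
`η (M - ε)` in absolute value up to the initial condition, whereas a false coordinate is at most
`‖X⁰‖_∞ + t η ε` after `t` steps. A missed true coordinate is dominated by a selected false one, so
the number of times it has been missed is bounded by an affine function of `t`; but as long as
the support is not recovered, every step misses at least one of the true coordinates. Summing
over `S*` bounds the first recovery time.
-/

section EuclideanNorm

variable {d : ℕ} (u v : Fin d → ℝ)

lemma l2norm_eq_norm_toLp : l2norm v = ‖WithLp.toLp 2 v‖ := by
  simp only [l2norm, EuclideanSpace.norm_eq, Real.norm_eq_abs, sq_abs]

lemma l2norm_nonneg : 0 ≤ l2norm v := Real.sqrt_nonneg _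

lemma l2norm_sq : l2norm v ^ 2 = ∑ i, v i ^ 2 :=
  Real.sq_sqrt (sum_nonneg fun _ _ => sq_nonneg _)

lemma l2norm_sq_eq_dotProduct : l2norm v ^ 2 = v ⬝ᵥ v := by
  rw [l2norm_sq]
  simp only [dotProduct, sq]

lemma l2norm_add_sq : l2norm (u + v) ^ 2 = l2norm u ^ 2 + 2 * (u ⬝ᵥ v) + l2norm v ^ 2 := by
  simp only [l2norm_sq_eq_dotProduct, add_dotProduct, dotProduct_add, dotProduct_comm v u]
  ring

lemma l2norm_sub_sq : l2norm (u - v) ^ 2 = l2norm u ^ 2 - 2 * (u ⬝ᵥ v) + l2norm v ^ 2 := by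
  simp only [l2norm_sq_eq_dotProduct, sub_dotProduct, dotProduct_sub, dotProduct_comm v u]
  ring

lemma l2norm_smul_sq (c : ℝ) : l2norm (c • v) ^ 2 = c ^ 2 * l2norm v ^ 2 := by
  simp only [l2norm_sq_eq_dotProduct, smul_dotProduct, dotProduct_smul, smul_eq_mul]
  ring

lemma l2norm_eq_zero {v : Fin d → ℝ} : l2norm v = 0 ↔ v = 0 := by
  rw [l2norm_eq_norm_toLp, norm_eq_zero, WithLp.toLp_eq_zero]

lemma l2norm_add_le : l2norm (u + v) ≤ l2norm u + l2norm v := by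
  simpa only [l2norm_eq_norm_toLp, WithLp.toLp_add] using
    norm_add_le (WithLp.toLp 2 u) (WithLp.toLp 2 v)

lemma l2norm_single_one (i : Fin d) : l2norm (Pi.single i 1) = 1 :=
  (l2norm_eq_norm_toLp _).trans ((PiLp.norm_single 2 (fun _ => ℝ) i 1).trans norm_one)

lemma abs_dotProduct_le : |u ⬝ᵥ v| ≤ l2norm u * l2norm v := by
  simpa only [l2norm_eq_norm_toLp, EuclideanSpace.inner_toLp_toLp, star_trivial,
    dotProduct_comm v u] using abs_real_inner_le_norm (WithLp.toLp 2 u) (WithLp.toLp 2 v)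

lemma l2norm_indicator_le (s : Set (Fin d)) : l2norm (s.indicator v) ≤ l2norm v := by
  refine Real.sqrt_le_sqrt (sum_le_sum fun i _ => sq_le_sq.2 ?_)
  simpa only [Real.norm_eq_abs] using norm_indicator_le_norm_self v i

lemma abs_le_supNorm (i : Fin d) : |v i| ≤ supNorm v :=
  le_ciSup (f := fun i => |v i|) (Set.finite_range _).bddAbove i

end EuclideanNorm

section Support

variable {d : ℕ} {u v : Fin d → ℝ} {S T : Finset (Fin d)}

lemma mem_spt {i : Fin d} : i ∈ spt v ↔ v i ≠ 0 := by
  simp only [spt, mem_filter, mem_univ, true_and]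

lemma spt_subset_iff : spt v ⊆ S ↔ ∀ i ∉ S, v i = 0 := by
  simp only [subset_iff, mem_spt, not_imp_comm]

lemma spt_add_subset (hu : spt u ⊆ S) (hv : spt v ⊆ S) : spt (u + v) ⊆ S := by
  rw [spt_subset_iff] at *
  intro i hi
  rw [Pi.add_apply, hu i hi, hv i hi, add_zero]

lemma spt_sub_subset (hu : spt u ⊆ S) (hv : spt v ⊆ S) : spt (u - v) ⊆ S := by
  rw [spt_subset_iff] at *
  intro i hi
  rw [Pi.sub_apply, hu i hi, hv i hi, sub_zero]

lemma spt_smul_subset (c : ℝ) (hv : spt v ⊆ S) : spt (c • v) ⊆ S := by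
  rw [spt_subset_iff] at *
  intro i hi
  rw [Pi.smul_apply, hv i hi, smul_zero]

lemma spt_single_subset (i : Fin d) (c : ℝ) : spt (Pi.single i c) ⊆ {i} :=
  spt_subset_iff.2 fun _ hj => Pi.single_eq_of_ne (M := fun _ => ℝ) (notMem_singleton.1 hj) c

lemma spt_indicator_subset (s : Set (Fin d)) : spt (s.indicator v) ⊆ spt v :=
  spt_subset_iff.2 fun _ hi => Set.indicator_apply_eq_zero.2 fun _ => not_not.1 (mt mem_spt.2 hi)

lemma spt_indicator_coe_subset (S : Finset (Fin d)) :
    spt ((S : Set (Fin d)).indicator v) ⊆ S :=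
  spt_subset_iff.2 fun _ hi => Set.indicator_of_notMem (mt mem_coe.1 hi) v

end Support

section RestrictedIsometry

variable {m n : ℕ} (A : Matrix (Fin m) (Fin n) ℝ)

/-- The set of admissible restricted isometry constants of order `l`, of which `ripConst A l` is
the infimum. -/
def ripBounds (l : ℕ) : Set ℝ :=
  {δ : ℝ | 0 ≤ δ ∧ ∀ x : Fin n → ℝ, #(spt x) ≤ l →
    (1 - δ) * ∑ i, x i ^ 2 ≤ ∑ j, (A *ᵥ x) j ^ 2 ∧
    ∑ j, (A *ᵥ x) j ^ 2 ≤ (1 + δ) * ∑ i, x i ^ 2}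

lemma ripBounds_nonempty (l : ℕ) : (ripBounds A l).Nonempty := by
  have frobenius_bound (x : Fin n → ℝ) :
      ∑ j, (A *ᵥ x) j ^ 2 ≤ (∑ j, ∑ i, A j i ^ 2) * ∑ i, x i ^ 2 := by
    rw [sum_mul]
    exact sum_le_sum fun j _ => sum_mul_sq_le_sq_mul_sq univ (A j) x
  refine ⟨1 + ∑ j, ∑ i, A j i ^ 2, by positivity, fun x _ => ?_⟩
  have x_nonneg : 0 ≤ ∑ i, x i ^ 2 := by positivity
  have image_nonneg : 0 ≤ ∑ j, (A *ᵥ x) j ^ 2 := by positivity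
  have frobenius_nonneg : 0 ≤ (∑ j, ∑ i, A j i ^ 2) * ∑ i, x i ^ 2 := by positivity
  constructor <;> linarith [frobenius_bound x]

lemma isClosed_ripBounds (l : ℕ) : IsClosed (ripBounds A l) := by
  simp only [ripBounds, Set.ofPred_and, Set.ofPred_forall]
  refine (isClosed_le continuous_const continuous_id).inter ?_
  refine isClosed_iInter fun x => isClosed_iInter fun _ => ?_
  exact (isClosed_le (by fun_prop) (by fun_prop)).inter (isClosed_le (by fun_prop) (by fun_prop))

lemma isLeast_ripConst (l : ℕ) : IsLeast (ripBounds A l) (ripConst A l) :=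
  (isClosed_ripBounds A l).isLeast_csInf (ripBounds_nonempty A l) ⟨0, fun _ hδ => hδ.1⟩

lemma ripConst_nonneg (l : ℕ) : 0 ≤ ripConst A l := (isLeast_ripConst A l).1.1

lemma ripConst_mono : Monotone (ripConst A) := fun l l' hl =>
  (isLeast_ripConst A l).2 ⟨ripConst_nonneg A l', fun x hx =>
    (isLeast_ripConst A l').1.2 x (hx.trans hl)⟩

variable {A} {l : ℕ} {x u v : Fin n → ℝ}

lemma le_l2norm_mulVec_sq (hx : #(spt x) ≤ l) :
    (1 - ripConst A l) * l2norm x ^ 2 ≤ l2norm (A *ᵥ x) ^ 2 := by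
  simpa only [l2norm_sq] using ((isLeast_ripConst A l).1.2 x hx).1

lemma l2norm_mulVec_sq_le (hx : #(spt x) ≤ l) :
    l2norm (A *ᵥ x) ^ 2 ≤ (1 + ripConst A l) * l2norm x ^ 2 := by
  simpa only [l2norm_sq] using ((isLeast_ripConst A l).1.2 x hx).2

lemma l2norm_mulVec_le (hx : #(spt x) ≤ l) :
    l2norm (A *ᵥ x) ≤ √(1 + ripConst A l) * l2norm x := by
  have := ripConst_nonneg A l
  refine le_of_sq_le_sq ?_ (mul_nonneg (Real.sqrt_nonneg _) (l2norm_nonneg x))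
  rw [mul_pow, Real.sq_sqrt (by positivity)]
  exact l2norm_mulVec_sq_le hx

-- Polarization, applied to `‖v‖ • u ± ‖u‖ • v` so that both summands have the same norm.
lemma abs_dotProduct_mulVec_sub_le (h : #(spt u ∪ spt v) ≤ l) :
    |A *ᵥ u ⬝ᵥ A *ᵥ v - u ⬝ᵥ v| ≤ ripConst A l * l2norm u * l2norm v := by
  rcases (l2norm_nonneg u).eq_or_lt with hu | hu
  · simp [l2norm_eq_zero.1 hu.symm, l2norm]
  rcases (l2norm_nonneg v).eq_or_lt with hv | hv
  · simp [l2norm_eq_zero.1 hv.symm, l2norm]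
  set a := l2norm u with ha
  set b := l2norm v with hb
  set p := b • u + a • v with hp
  set q := b • u - a • v with hq
  have hbu : spt (b • u) ⊆ spt u ∪ spt v := spt_smul_subset b subset_union_left
  have hav : spt (a • v) ⊆ spt u ∪ spt v := spt_smul_subset a subset_union_right
  have hp_card : #(spt p) ≤ l := (card_le_card (spt_add_subset hbu hav)).trans h
  have hq_card : #(spt q) ≤ l := (card_le_card (spt_sub_subset hbu hav)).trans h
  have polarization : l2norm (A *ᵥ p) ^ 2 - l2norm (A *ᵥ q) ^ 2 =
      4 * (a * b) * (A *ᵥ u ⬝ᵥ A *ᵥ v) := by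
    simp only [hp, hq, mulVec_add, mulVec_sub, mulVec_smul, l2norm_add_sq, l2norm_sub_sq,
      smul_dotProduct, dotProduct_smul, smul_eq_mul]
    ring
  have norm_sq_p : l2norm p ^ 2 = 2 * (a * b) * (a * b + u ⬝ᵥ v) := by
    simp only [hp, l2norm_add_sq, l2norm_smul_sq, smul_dotProduct, dotProduct_smul, smul_eq_mul,
      ← ha, ← hb]
    ring
  have norm_sq_q : l2norm q ^ 2 = 2 * (a * b) * (a * b - u ⬝ᵥ v) := by
    simp only [hq, l2norm_sub_sq, l2norm_smul_sq, smul_dotProduct, dotProduct_smul, smul_eq_mul,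
      ← ha, ← hb]
    ring
  have p_lower := le_l2norm_mulVec_sq (A := A) hp_card
  have p_upper := l2norm_mulVec_sq_le (A := A) hp_card
  have q_lower := le_l2norm_mulVec_sq (A := A) hq_card
  have q_upper := l2norm_mulVec_sq_le (A := A) hq_card
  rw [norm_sq_p] at p_lower p_upper
  rw [norm_sq_q] at q_lower q_upper
  have hab : 0 < 4 * (a * b) := by positivity
  rw [abs_le]
  constructor <;> refine le_of_mul_le_mul_left ?_ hab <;> linarith

end RestrictedIsometry

section LeastSquares

variable {m n : ℕ} {A : Matrix (Fin m) (Fin n) ℝ}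

/-- `x` is a least-squares solution of `A x = y` among the vectors supported on `S`. -/
structure IsLeastSquaresOn (A : Matrix (Fin m) (Fin n) ℝ) (y : Fin m → ℝ) (S : Finset (Fin n))
    (x : Fin n → ℝ) : Prop where
  spt_subset : spt x ⊆ S
  le : ∀ z, spt z ⊆ S → l2norm (A *ᵥ x - y) ≤ l2norm (A *ᵥ z - y)

lemma transpose_mulVec_apply_eq_dotProduct (r : Fin m → ℝ) (i : Fin n) :
    (Aᵀ *ᵥ r) i = A *ᵥ Pi.single i 1 ⬝ᵥ r := by
  rw [mulVec_single_one]
  rfl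

lemma abs_transpose_mulVec_apply_le {i : Fin n} (hA : ∑ j, A j i ^ 2 ≤ 1) (r : Fin m → ℝ) :
    |(Aᵀ *ᵥ r) i| ≤ l2norm r :=
  (abs_dotProduct_le (A.col i) r).trans
    (mul_le_of_le_one_left (l2norm_nonneg r) (Real.sqrt_le_one.2 hA))

lemma abs_transpose_mulVec_mulVec_sub_le {l : ℕ} {z : Fin n → ℝ} {i : Fin n}
    (h : #(insert i (spt z)) ≤ l) :
    |(Aᵀ *ᵥ (A *ᵥ z)) i - z i| ≤ ripConst A l * l2norm z := by
  have hcard : #(spt (Pi.single i (1 : ℝ)) ∪ spt z) ≤ l :=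
    (card_le_card (union_subset_union_left (spt_single_subset i 1))).trans h
  simpa only [transpose_mulVec_apply_eq_dotProduct, single_one_dotProduct, l2norm_single_one,
    mul_one] using abs_dotProduct_mulVec_sub_le (A := A) hcard

namespace IsLeastSquaresOn

variable {S : Finset (Fin n)} {x : Fin n → ℝ}

lemma dotProduct_residual_eq_zero {y : Fin m → ℝ} (hx : IsLeastSquaresOn A y S x)
    {v : Fin n → ℝ} (hv : spt v ⊆ S) : A *ᵥ v ⬝ᵥ (A *ᵥ x - y) = 0 := by
  have perturbed (s : ℝ) : l2norm (A *ᵥ (x + s • v) - y) ^ 2 = l2norm (A *ᵥ v) ^ 2 * (s * s) +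
      2 * (A *ᵥ v ⬝ᵥ (A *ᵥ x - y)) * s + l2norm (A *ᵥ x - y) ^ 2 := by
    rw [mulVec_add, mulVec_smul, add_sub_right_comm, l2norm_add_sq, l2norm_smul_sq,
      dotProduct_smul, smul_eq_mul, dotProduct_comm (A *ᵥ x - y)]
    ring
  have increase_nonneg (s : ℝ) : 0 ≤ l2norm (A *ᵥ v) ^ 2 * (s * s) +
      2 * (A *ᵥ v ⬝ᵥ (A *ᵥ x - y)) * s + 0 := by
    have := pow_le_pow_left₀ (l2norm_nonneg _)
      (hx.le (x + s • v) (spt_add_subset hx.spt_subset (spt_smul_subset s hv))) 2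
    linarith [perturbed s]
  have := discrim_le_zero increase_nonneg
  rw [discrim] at this
  nlinarith

lemma gradient_eq_zero {y : Fin m → ℝ} (hx : IsLeastSquaresOn A y S x) {i : Fin n} (hi : i ∈ S) :
    (Aᵀ *ᵥ (A *ᵥ x - y)) i = 0 := by
  rw [transpose_mulVec_apply_eq_dotProduct]
  exact hx.dotProduct_residual_eq_zero
    ((spt_single_subset i 1).trans (singleton_subset_iff.2 hi))

lemma apply_eq_zero {y : Fin m → ℝ} (hx : IsLeastSquaresOn A y S x) {i : Fin n} (hi : i ∉ S) :
    x i = 0 := spt_subset_iff.1 hx.spt_subset i hi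

variable {k : ℕ} {xstar : Fin n → ℝ} {e : Fin m → ℝ}

lemma sub_eq_indicator_add {y : Fin m → ℝ} (hx : IsLeastSquaresOn A y S x) (xstar : Fin n → ℝ) :
    xstar - x = (S : Set (Fin n)).indicator (xstar - x) + (S : Set (Fin n))ᶜ.indicator xstar := by
  funext i
  by_cases hi : i ∈ S <;> simp [hi, hx.apply_eq_zero]

lemma l2norm_mulVec_indicator_sub_sq (hx : IsLeastSquaresOn A (A *ᵥ xstar + e) S x) :
    l2norm (A *ᵥ (S : Set (Fin n)).indicator (xstar - x)) ^ 2 =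
      -(A *ᵥ (S : Set (Fin n)).indicator (xstar - x) ⬝ᵥ
          A *ᵥ (S : Set (Fin n))ᶜ.indicator xstar) -
        A *ᵥ (S : Set (Fin n)).indicator (xstar - x) ⬝ᵥ e := by
  set v := (S : Set (Fin n)).indicator (xstar - x) with hv
  set w := (S : Set (Fin n))ᶜ.indicator xstar
  have residual : A *ᵥ x - (A *ᵥ xstar + e) = -(A *ᵥ v + A *ᵥ w + e) := by
    rw [← mulVec_add, hv, ← hx.sub_eq_indicator_add xstar, mulVec_sub]
    abel
  have orthogonality := hx.dotProduct_residual_eq_zero (spt_indicator_coe_subset S (v := xstar - x))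
  rw [← hv, residual, dotProduct_neg, dotProduct_add, dotProduct_add,
    ← l2norm_sq_eq_dotProduct] at orthogonality
  linarith

lemma l2norm_indicator_sub_le (hx : IsLeastSquaresOn A (A *ᵥ xstar + e) S x)
    (hA : ripConst A k < 1) (hS : #S ≤ k) (hxstar : #(spt xstar) ≤ k) :
    l2norm ((S : Set (Fin n)).indicator (xstar - x)) ≤
      (ripConst A (2 * k) * l2norm xstar + √(1 + ripConst A k) * l2norm e) /
        (1 - ripConst A k) := by
  set v := (S : Set (Fin n)).indicator (xstar - x) with hv
  set w := (S : Set (Fin n))ᶜ.indicator xstar with hw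
  have card_v : #(spt v) ≤ k := (card_le_card (spt_indicator_coe_subset S)).trans hS
  have card_vw : #(spt v ∪ spt w) ≤ 2 * k := by
    have := card_union_le (spt v) (spt w)
    have card_w : #(spt w) ≤ #(spt xstar) := card_le_card (spt_indicator_subset _)
    omega
  have orthogonal : v ⬝ᵥ w = 0 := sum_eq_zero fun i _ => by
    by_cases hi : i ∈ S <;> simp [hv, hw, hi]
  have cross_le : -(A *ᵥ v ⬝ᵥ A *ᵥ w) ≤ ripConst A (2 * k) * l2norm v * l2norm xstar := by
    have := abs_dotProduct_mulVec_sub_le (A := A) card_vw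
    rw [orthogonal, sub_zero] at this
    refine (neg_le_abs _).trans (this.trans ?_)
    have := ripConst_nonneg A (2 * k)
    have := l2norm_nonneg v
    gcongr
    exact l2norm_indicator_le xstar _
  have noise_le : -(A *ᵥ v ⬝ᵥ e) ≤ √(1 + ripConst A k) * l2norm v * l2norm e :=
    (neg_le_abs _).trans ((abs_dotProduct_le _ e).trans
      (mul_le_mul_of_nonneg_right (l2norm_mulVec_le card_v) (l2norm_nonneg e)))
  rw [le_div_iff₀' (sub_pos.2 hA)]
  rcases (l2norm_nonneg v).eq_or_lt with hv0 | hv0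
  · have := ripConst_nonneg A (2 * k)
    have := l2norm_nonneg xstar
    have := l2norm_nonneg e
    rw [← hv0, mul_zero]
    positivity
  · refine le_of_mul_le_mul_left ?_ hv0
    linarith [le_l2norm_mulVec_sq (A := A) card_v, hx.l2norm_mulVec_indicator_sub_sq]

lemma l2norm_sub_le (hx : IsLeastSquaresOn A (A *ᵥ xstar + e) S x)
    (hA : ripConst A k < 1) (hS : #S ≤ k) (hxstar : #(spt xstar) ≤ k) :
    l2norm (xstar - x) ≤ (1 + ripConst A (2 * k) / (1 - ripConst A k)) * l2norm xstar +
      √(1 + ripConst A k) / (1 - ripConst A k) * l2norm e := by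
  calc l2norm (xstar - x)
      ≤ l2norm ((S : Set (Fin n)).indicator (xstar - x)) +
          l2norm ((S : Set (Fin n))ᶜ.indicator xstar) := by
        conv_lhs => rw [hx.sub_eq_indicator_add xstar]
        exact l2norm_add_le _ _
    _ ≤ (ripConst A (2 * k) * l2norm xstar + √(1 + ripConst A k) * l2norm e) /
          (1 - ripConst A k) + l2norm xstar :=
        add_le_add (hx.l2norm_indicator_sub_le hA hS hxstar) (l2norm_indicator_le _ _)
    _ = _ := by ring

lemma abs_gradient_add_le (hx : IsLeastSquaresOn A (A *ᵥ xstar + e) S x)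
    (hA : ripConst A k < 1) (hS : #S ≤ k) (hxstar : #(spt xstar) ≤ k) {i : Fin n}
    (hcol : ∑ j, A j i ^ 2 ≤ 1) (hi : i ∉ S) :
    |(Aᵀ *ᵥ (A *ᵥ x - (A *ᵥ xstar + e))) i + xstar i| ≤
      alphaRIP A k * l2norm xstar + gammaRIP A k * l2norm e := by
  set z := xstar - x with hz
  have spt_z : spt z ⊆ spt xstar ∪ S :=
    spt_sub_subset subset_union_left (hx.spt_subset.trans subset_union_right)
  have card_z : #(insert i (spt z)) ≤ 2 * k + 1 := by
    have := card_insert_le i (spt z)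
    have := card_le_card spt_z
    have := card_union_le (spt xstar) S
    omega
  have decomposition : (Aᵀ *ᵥ (A *ᵥ x - (A *ᵥ xstar + e))) i + xstar i =
      -(((Aᵀ *ᵥ (A *ᵥ z)) i - z i) + (Aᵀ *ᵥ e) i) := by
    simp only [hz, mulVec_sub, mulVec_add, Pi.sub_apply, Pi.add_apply, hx.apply_eq_zero hi]
    ring
  calc |(Aᵀ *ᵥ (A *ᵥ x - (A *ᵥ xstar + e))) i + xstar i|
      ≤ |(Aᵀ *ᵥ (A *ᵥ z)) i - z i| + |(Aᵀ *ᵥ e) i| := by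
        rw [decomposition, abs_neg]
        exact abs_add_le _ _
    _ ≤ ripConst A (2 * k + 1) * l2norm z + l2norm e :=
        add_le_add (abs_transpose_mulVec_mulVec_sub_le card_z)
          (abs_transpose_mulVec_apply_le hcol e)
    _ ≤ ripConst A (2 * k + 1) *
          ((1 + ripConst A (2 * k) / (1 - ripConst A k)) * l2norm xstar +
            √(1 + ripConst A k) / (1 - ripConst A k) * l2norm e) + l2norm e := by
        have := ripConst_nonneg A (2 * k + 1)
        gcongr
        exact hx.l2norm_sub_le hA hS hxstar
    _ = alphaRIP A k * l2norm xstar + gammaRIP A k * l2norm e := by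
        rw [alphaRIP, gammaRIP]
        ring

end IsLeastSquaresOn

lemma alphaRIP_nonneg {k : ℕ} (hA : ripConst A k < 1) : 0 ≤ alphaRIP A k := by
  have := sub_pos.2 hA
  have := ripConst_nonneg A (2 * k + 1)
  have := ripConst_nonneg A (2 * k)
  rw [alphaRIP]
  positivity

lemma gammaRIP_nonneg {k : ℕ} (hA : ripConst A k < 1) : 0 ≤ gammaRIP A k := by
  have := sub_pos.2 hA
  have := ripConst_nonneg A (2 * k + 1)
  rw [gammaRIP]
  positivity

lemma alphaRIP_mul_add_gammaRIP_mul_nonneg {k : ℕ} (hA : ripConst A k < 1) (xstar : Fin n → ℝ)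
    (e : Fin m → ℝ) : 0 ≤ alphaRIP A k * l2norm xstar + gammaRIP A k * l2norm e :=
  add_nonneg (mul_nonneg (alphaRIP_nonneg hA) (l2norm_nonneg xstar))
    (mul_nonneg (gammaRIP_nonneg hA) (l2norm_nonneg e))

end LeastSquares

section Exploration

variable {ι : Type*}

lemma abs_coe_signType_mul_le (s : SignType) (x : ℝ) : |s * x| ≤ |x| := by
  cases s <;> simp

lemma le_sum_count_notMem [DecidableEq ι] {T : Finset ι} {S : ℕ → Finset ι} {N : ℕ}
    (h : ∀ t < N, ¬T ⊆ S t) : N ≤ ∑ i ∈ T, Nat.count (fun t => i ∉ S t) N := by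
  induction N with
  | zero => exact Nat.zero_le _
  | succ N ih =>
    obtain ⟨i, hiT, hiS⟩ := not_subset.1 (h N N.lt_succ_self)
    have one_le : 1 ≤ ∑ i ∈ T, if i ∉ S N then 1 else 0 := by
      simpa only [hiS, not_false_eq_true, if_true] using
        single_le_sum (f := fun i => if i ∉ S N then 1 else 0) (fun _ _ => Nat.zero_le _) hiT
    simp only [Nat.count_succ, sum_add_distrib]
    exact add_le_add (ih fun t ht => h t (ht.trans N.lt_succ_self)) one_le

/-- The exploration process abstracted from SEA, with target `T` and sign pattern `σ`: `S t`
collects largest entries of `X t`, each step moves a coordinate outside `T` by at most `β`, and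
moves a coordinate of `T` by at least `a` in the direction `σ` when it is missed by `S t`, and not
at all otherwise. -/
structure IsExploration (T : Finset ι) (σ : ι → SignType) (B a β : ℝ) (S : ℕ → Finset ι)
    (X : ℕ → ι → ℝ) : Prop where
  drift_nonneg : 0 ≤ a
  noise_nonneg : 0 ≤ β
  card_le (t : ℕ) : #T ≤ #(S t)
  select (t : ℕ) : ∀ i ∈ S t, ∀ j ∉ S t, |X t j| ≤ |X t i|
  init (i : ι) : |X 0 i| ≤ B
  noise (t : ℕ) : ∀ j ∉ T, |X (t + 1) j - X t j| ≤ β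
  drift (t : ℕ) : ∀ i ∈ T, i ∉ S t → a ≤ σ i * (X (t + 1) i - X t i)
  stay (t : ℕ) : ∀ i ∈ T, i ∈ S t → X (t + 1) i = X t i

namespace IsExploration

variable {T : Finset ι} {σ : ι → SignType} {B a β : ℝ} {S : ℕ → Finset ι} {X : ℕ → ι → ℝ}

lemma abs_le_of_notMem (h : IsExploration T σ B a β S X) {j : ι} (hj : j ∉ T) (t : ℕ) :
    |X t j| ≤ B + t * β := by
  induction t with
  | zero => simpa using h.init j
  | succ t ih =>
    have := abs_sub_abs_le_abs_sub (X (t + 1) j) (X t j)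
    push_cast
    linarith [h.noise t j hj]

lemma count_mul_sub_le_abs [DecidableEq ι] (h : IsExploration T σ B a β S X) {i : ι}
    (hi : i ∈ T) (t : ℕ) : Nat.count (fun s => i ∉ S s) t * a - B ≤ |X t i| := by
  refine le_trans ?_ ((le_abs_self _).trans (abs_coe_signType_mul_le (σ i) (X t i)))
  induction t with
  | zero =>
    have := neg_le_of_abs_le ((abs_coe_signType_mul_le (σ i) (X 0 i)).trans (h.init i))
    simpa using this
  | succ t ih =>
    by_cases hiS : i ∈ S t
    · simpa [Nat.count_succ, hiS, h.stay t i hi hiS] using ih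
    · have := h.drift t i hi hiS
      simp only [Nat.count_succ, hiS, not_false_eq_true, if_true]
      push_cast
      linarith

lemma count_mul_le_of_notMem_apply [DecidableEq ι] (h : IsExploration T σ B a β S X) {i : ι}
    (hi : i ∈ T) {t : ℕ} (hiS : i ∉ S t) : Nat.count (fun s => i ∉ S s) t * a ≤ 2 * B + t * β := by
  obtain ⟨j, hjS, hjT⟩ : ∃ j ∈ S t, j ∉ T := by
    by_contra! hST
    exact hiS (eq_of_subset_of_card_le hST (h.card_le t) ▸ hi)
  linarith [h.count_mul_sub_le_abs hi t, h.select t j hjS i hiS, h.abs_le_of_notMem hjT t]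

lemma count_mul_le [DecidableEq ι] (h : IsExploration T σ B a β S X) {i : ι} (hi : i ∈ T) (t : ℕ) :
    Nat.count (fun s => i ∉ S s) t * a ≤ a + 2 * B + t * β := by
  induction t with
  | zero =>
    have := (abs_nonneg _).trans (h.init i)
    have := h.drift_nonneg
    rw [Nat.count_zero, Nat.cast_zero, zero_mul, zero_mul]
    positivity
  | succ t ih =>
    have := h.noise_nonneg
    by_cases hiS : i ∈ S t
    · simp only [Nat.count_succ, hiS, not_true_eq_false, if_false, add_zero]
      push_cast
      linarith
    · have := h.count_mul_le_of_notMem_apply hi hiS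
      simp only [Nat.count_succ, hiS, not_false_eq_true, if_true]
      push_cast
      linarith

lemma mul_le_of_forall_not_subset (h : IsExploration T σ B a β S X) {N : ℕ}
    (hN : ∀ t < N, ¬T ⊆ S t) : N * (a - #T * β) ≤ #T * (a + 2 * B) := by
  classical
  have : N * a ≤ #T * (a + 2 * B + N * β) :=
    calc N * a ≤ (∑ i ∈ T, Nat.count (fun t => i ∉ S t) N : ℕ) * a :=
          mul_le_mul_of_nonneg_right (Nat.cast_le.2 (le_sum_count_notMem hN)) h.drift_nonneg
      _ = ∑ i ∈ T, Nat.count (fun t => i ∉ S t) N * a := by rw [Nat.cast_sum, sum_mul]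
      _ ≤ ∑ _i ∈ T, (a + 2 * B + N * β) := sum_le_sum fun i hi => h.count_mul_le hi N
      _ = #T * (a + 2 * B + N * β) := by rw [sum_const, nsmul_eq_mul]
  linarith

theorem exists_subset (h : IsExploration T σ B a β S X) (ha : #T * β < a) :
    ∃ t : ℕ, t * (a - #T * β) ≤ #T * (a + 2 * B) ∧ T ⊆ S t := by
  have hvisit : ∃ t, T ⊆ S t := by
    by_contra! hcon
    obtain ⟨N, hN⟩ := exists_nat_gt (#T * (a + 2 * B) / (a - #T * β))
    rw [div_lt_iff₀ (sub_pos.2 ha)] at hN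
    exact hN.not_ge (h.mul_le_of_forall_not_subset fun t _ => hcon t)
  classical
  exact ⟨Nat.find hvisit, h.mul_le_of_forall_not_subset fun t ht => Nat.find_min hvisit ht,
    Nat.find_spec hvisit⟩

end IsExploration

end Exploration

namespace SEATraj

variable {m n k : ℕ} {A : Matrix (Fin m) (Fin n) ℝ} {y : Fin m → ℝ} {η : ℝ} {X0 : Fin n → ℝ}

lemma isLeastSquaresOn (traj : SEATraj k A y η X0) (t : ℕ) :
    IsLeastSquaresOn A y (traj.S t) (traj.x t) where
  spt_subset := spt_subset_iff.2 (traj.x_supp t)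
  le z hz := traj.x_min t z (spt_subset_iff.1 hz)

lemma X_succ_sub (traj : SEATraj k A y η X0) (t : ℕ) (i : Fin n) :
    traj.X (t + 1) i - traj.X t i = -(η * (Aᵀ *ᵥ (A *ᵥ traj.x t - y)) i) := by
  rw [traj.X_upd, Pi.sub_apply, Pi.smul_apply, smul_eq_mul]
  ring

lemma isExploration {xstar : Fin n → ℝ} {M ε : ℝ} (traj : SEATraj k A y η X0) (hη : 0 ≤ η)
    (hxstar : #(spt xstar) ≤ k) (hM : ∀ i ∈ spt xstar, M ≤ |xstar i|) (hε : 0 ≤ ε) (hεM : ε ≤ M)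
    (hgrad : ∀ t, ∀ i ∉ traj.S t, |(Aᵀ *ᵥ (A *ᵥ traj.x t - y)) i + xstar i| ≤ ε) :
    IsExploration (spt xstar) (fun i => SignType.sign (xstar i)) (supNorm X0) (η * (M - ε))
      (η * ε) traj.S traj.X where
  drift_nonneg := mul_nonneg hη (sub_nonneg.2 hεM)
  noise_nonneg := mul_nonneg hη hε
  card_le t := hxstar.trans_eq (traj.card_S t).symm
  select := traj.sel
  init i := (congrArg _ (congrFun traj.X_init i)).trans_le (abs_le_supNorm X0 i)
  noise t j hj := by
    rw [traj.X_succ_sub, abs_neg, abs_mul, abs_of_nonneg hη]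
    refine mul_le_mul_of_nonneg_left ?_ hη
    by_cases hjS : j ∈ traj.S t
    · rwa [(traj.isLeastSquaresOn t).gradient_eq_zero hjS, abs_zero]
    · simpa only [spt_subset_iff.1 Subset.rfl j hj, add_zero] using hgrad t j hjS
  drift t i hi hiS := by
    set g := (Aᵀ *ᵥ (A *ᵥ traj.x t - y)) i
    have sign_mul_le : SignType.sign (xstar i) * (g + xstar i) ≤ ε :=
      (le_abs_self _).trans ((abs_coe_signType_mul_le _ _).trans (hgrad t i hiS))
    have gap : M - ε ≤ SignType.sign (xstar i) * -g := by
      linarith [hM i hi, sign_mul_self (xstar i)]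
    calc η * (M - ε) ≤ η * (SignType.sign (xstar i) * -g) := mul_le_mul_of_nonneg_left gap hη
      _ = SignType.sign (xstar i) * (traj.X (t + 1) i - traj.X t i) := by
        rw [traj.X_succ_sub]
        ring
  stay t i _ hiS := by
    rw [← sub_eq_zero, traj.X_succ_sub, (traj.isLeastSquaresOn t).gradient_eq_zero hiS, mul_zero,
      neg_zero]

end SEATraj

lemma div_two_mul_le_div_add_one {s k M : ℝ} (hs : 1 ≤ s) (hsk : s ≤ k) (hM : 0 ≤ M) :
    M / (2 * k) ≤ M / (s + 1) :=
  div_le_div_of_nonneg_left hM (by linarith) (by linarith)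

lemma sharp_recovery_time_le {s k B η M ε : ℝ} (hs : 1 ≤ s) (hsk : s ≤ k) (hB : 0 ≤ B)
    (hη : 0 ≤ η) (hε : 0 ≤ ε) (hM : ε < M / (2 * k)) :
    (2 * s * B / η + s * M) / (M - (s + 1) * ε) ≤
      (2 * k * B / η + (k + 1) * M) / (M - 2 * k * ε) := by
  have hk : 0 < k := by linarith
  have hMε : 2 * k * ε < M := (lt_div_iff₀' (by positivity)).1 hM
  have hM_nonneg : 0 ≤ M := le_trans (by positivity) hMε.le
  exact div_le_div₀ (by positivity) (by gcongr; linarith) (sub_pos.2 hMε) (by gcongr; linarith)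

theorem sea_recovery_RIP_general {m n k : ℕ} (A : Matrix (Fin m) (Fin n) ℝ)
    (hRIP : ripConst A k < 1) (hcols : ∀ j : Fin n, ∑ i, (A i j) ^ 2 ≤ 1)
    (xstar : Fin n → ℝ) (hspars : (spt xstar).card ≤ k) (hne : (spt xstar).Nonempty)
    (e : Fin m → ℝ) (y : Fin m → ℝ) (hy : y = A.mulVec xstar + e)
    (hRC : gammaRIP A k * l2norm e <
      ((spt xstar).inf' hne (fun i => |xstar i|)) / ((spt xstar).card + 1) -
        alphaRIP A k * l2norm xstar)
    (η : ℝ) (hη : 0 < η) (X0 : Fin n → ℝ)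
    (traj : SEATraj k A y η X0) :
    ∃ ts : ℕ,
      (ts : ℝ) ≤ (2 * (spt xstar).card * supNorm X0 / η
          + (spt xstar).card * (spt xstar).inf' hne (fun i => |xstar i|)) /
        ((spt xstar).inf' hne (fun i => |xstar i|) -
          ((spt xstar).card + 1) * (alphaRIP A k * l2norm xstar + gammaRIP A k * l2norm e)) ∧
      spt xstar ⊆ traj.S ts := by
  subst hy
  set M := (spt xstar).inf' hne fun i => |xstar i|
  set ε := alphaRIP A k * l2norm xstar + gammaRIP A k * l2norm e
  set s := (spt xstar).card
  have hε : 0 ≤ ε := alphaRIP_mul_add_gammaRIP_mul_nonneg hRIP xstar e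
  have hsε : 0 ≤ s * ε := by positivity
  have hεM : (s + 1) * ε < M := (lt_div_iff₀' (by positivity)).1 (lt_sub_iff_add_lt'.1 hRC)
  have exploration := traj.isExploration hη.le hspars (fun i hi => inf'_le _ hi) hε (by linarith)
    fun t i => (traj.isLeastSquaresOn t).abs_gradient_add_le hRIP (traj.card_S t).le hspars
      (hcols i)
  obtain ⟨ts, hts, hsubset⟩ := exploration.exists_subset
    (by linarith [mul_lt_mul_of_pos_left hεM hη])
  refine ⟨ts, (le_div_iff₀ (by linarith)).2 (le_of_mul_le_mul_left ?_ hη), hsubset⟩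
  have : η * (2 * s * supNorm X0 / η + s * M) = s * (η * M + 2 * supNorm X0) := by
    field_simp
    ring
  linarith [mul_nonneg hη.le hsε]

/-- Recovery in the RIP case: under the recovery condition (RC_RIP), SEA visits
the true support within `T_RIP` iterations. -/
theorem sea_recovery_RIP {m n k : ℕ} (hm : 0 < m) (hk : 0 < k)
    (hkn : 2 * k + 1 ≤ n)
    (A : Matrix (Fin m) (Fin n) ℝ) (hRIP : ripConst A (2 * k + 1) < 1)
    (hcols : ∀ j : Fin n, ∑ i, (A i j) ^ 2 = 1)
    (xstar : Fin n → ℝ) (hspars : (spt xstar).card ≤ k) (hne : (spt xstar).Nonempty)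
    (e : Fin m → ℝ) (y : Fin m → ℝ) (hy : y = A.mulVec xstar + e)
    (hRC : gammaRIP A k * l2norm e <
      ((spt xstar).inf' hne (fun i => |xstar i|)) / (2 * k) -
        alphaRIP A k * l2norm xstar)
    (η : ℝ) (hη : 0 < η) (X0 : Fin n → ℝ)
    (traj : SEATraj k A y η X0) :
    ∃ ts : ℕ,
      (ts : ℝ) ≤ (2 * k * supNorm X0 / η
          + (k + 1) * (spt xstar).inf' hne (fun i => |xstar i|)) /
        ((spt xstar).inf' hne (fun i => |xstar i|) -
          2 * k * (alphaRIP A k * l2norm xstar + gammaRIP A k * l2norm e)) ∧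
      spt xstar ⊆ traj.S ts := by
  have hδ : ripConst A k < 1 := (ripConst_mono A (by omega)).trans_lt hRIP
  have card_ge : (1 : ℝ) ≤ #(spt xstar) := Nat.one_le_cast.2 hne.card_pos
  have card_le : (#(spt xstar) : ℝ) ≤ k := Nat.cast_le.2 hspars
  have min_nonneg : 0 ≤ (spt xstar).inf' hne fun i => |xstar i| :=
    le_inf' hne _ fun i _ => abs_nonneg (xstar i)
  have sharp_condition := hRC.trans_le
    (sub_le_sub_right (div_two_mul_le_div_add_one card_ge card_le min_nonneg) _)
  obtain ⟨ts, hts, hsubset⟩ := sea_recovery_RIP_general A hδ (fun j => (hcols j).le) xstar hspars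
    hne e y hy sharp_condition η hη X0 traj
  exact ⟨ts, hts.trans (sharp_recovery_time_le card_ge card_le
    (Real.iSup_nonneg fun i => abs_nonneg (X0 i)) hη.le
    (alphaRIP_mul_add_gammaRIP_mul_nonneg hδ xstar e) (lt_sub_iff_add_lt'.1 hRC)), hsubset⟩

end
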